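/- For every real number α, define ψ_α : ℝ → ℝ by ψ_α(x) = ((α−1)/2)·x³ + (3/2)·(α−1)·x² + α·x + 1 for x ≤ 0 and ψ_α(x) = ((α+1)/2)·x³ − (3/2)·(α+1)·x² + α·x + 1 for x ≥ 0 (the two formulas agree at x = 0). Then: ψ_α(−1) = 0 and ψ_α(1) = 0; ψ_α(0) = 1; ψ_α is differentiable at every point of ℝ and its derivative at 0 equals α; the second derivative of ψ_α vanishes at −1 and at 1; and the fourth iterated derivative of ψ_α vanishes at every point of (−1,0) ∪ (0,1). -/

import Mathlib

open Set

/-- The function `ψ_α` of Remark 2.7: a piecewise cubic on `ℝ`. -/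
noncomputable def psi (α : ℝ) (x : ℝ) : ℝ :=
  if x ≤ 0 then
    (α - 1) / 2 * x ^ 3 + 3 / 2 * (α - 1) * x ^ 2 + α * x + 1
  else
    (α + 1) / 2 * x ^ 3 - 3 / 2 * (α + 1) * x ^ 2 + α * x + 1

/-- The real cubic function with coefficients `a, b, c, d`, in decreasing order of degree. -/
def cubic (a b c d x : ℝ) : ℝ := a * x ^ 3 + b * x ^ 2 + c * x + d

theorem hasDerivAt_cubic (a b c d x : ℝ) :
    HasDerivAt (cubic a b c d) (cubic 0 (3 * a) (2 * b) c x) x := by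
  have h := ((((hasDerivAt_pow 3 x).const_mul a).add ((hasDerivAt_pow 2 x).const_mul b)).add
    ((hasDerivAt_id x).const_mul c)).add_const d
  refine h.congr_deriv ?_
  simp only [cubic]
  norm_num
  ring

theorem deriv_cubic (a b c d : ℝ) :
    deriv (cubic a b c d) = cubic 0 (3 * a) (2 * b) c :=
  funext fun x => (hasDerivAt_cubic a b c d x).deriv

theorem iterate_deriv_two_cubic (a b c d x : ℝ) :
    deriv^[2] (cubic a b c d) x = 6 * a * x + 2 * b := by
  simp only [Function.iterate_succ, Function.iterate_zero, Function.comp_apply, id, deriv_cubic,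
    cubic]
  ring

theorem iterate_deriv_four_cubic (a b c d x : ℝ) : deriv^[4] (cubic a b c d) x = 0 := by
  simp only [Function.iterate_succ, Function.iterate_zero, Function.comp_apply, id, deriv_cubic,
    cubic]
  ring

theorem psi_eqOn_Iic (α : ℝ) :
    EqOn (psi α) (cubic ((α - 1) / 2) (3 / 2 * (α - 1)) α 1) (Iic 0) :=
  fun _ hx => if_pos hx

theorem psi_eqOn_Ici (α : ℝ) :
    EqOn (psi α) (cubic ((α + 1) / 2) (-(3 / 2 * (α + 1))) α 1) (Ici 0) := by
  intro x hx
  rcases eq_or_lt_of_le (mem_Ici.1 hx) with rfl | h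
  · simp [psi, cubic]
  · rw [psi, if_neg h.not_ge, cubic]
    ring

theorem psi_eventuallyEq_of_neg (α : ℝ) {x : ℝ} (hx : x < 0) :
    psi α =ᶠ[nhds x] cubic ((α - 1) / 2) (3 / 2 * (α - 1)) α 1 :=
  (psi_eqOn_Iic α).eventuallyEq_of_mem (Iic_mem_nhds hx)

theorem psi_eventuallyEq_of_pos (α : ℝ) {x : ℝ} (hx : 0 < x) :
    psi α =ᶠ[nhds x] cubic ((α + 1) / 2) (-(3 / 2 * (α + 1))) α 1 :=
  (psi_eqOn_Ici α).eventuallyEq_of_mem (Ici_mem_nhds hx)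

theorem hasDerivAt_psi_zero (α : ℝ) : HasDerivAt (psi α) α 0 := by
  have hl : HasDerivWithinAt (psi α) α (Iic 0) 0 :=
    ((hasDerivAt_cubic _ _ _ _ 0).hasDerivWithinAt.congr_of_mem (psi_eqOn_Iic α)
      self_mem_Iic).congr_deriv (by simp [cubic])
  have hr : HasDerivWithinAt (psi α) α (Ici 0) 0 :=
    ((hasDerivAt_cubic _ _ _ _ 0).hasDerivWithinAt.congr_of_mem (psi_eqOn_Ici α)
      self_mem_Ici).congr_deriv (by simp [cubic])
  simpa [Iic_union_Ici] using hl.union hr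

theorem Filter.EventuallyEq.iterate_deriv {f g : ℝ → ℝ} {x : ℝ} (h : f =ᶠ[nhds x] g) (n : ℕ) :
    deriv^[n] f =ᶠ[nhds x] deriv^[n] g := by
  induction n with
  | zero => exact h
  | succ n ih => simpa only [Function.iterate_succ_apply'] using ih.deriv

theorem psi_properties (α : ℝ) :
    psi α (-1) = 0 ∧ psi α 1 = 0 ∧ psi α 0 = 1 ∧
    (∀ x : ℝ, DifferentiableAt ℝ (psi α) x) ∧
    deriv (psi α) 0 = α ∧
    deriv^[2] (psi α) (-1) = 0 ∧ deriv^[2] (psi α) 1 = 0 ∧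
    ∀ x ∈ Ioo (-1 : ℝ) 0 ∪ Ioo (0 : ℝ) 1, deriv^[4] (psi α) x = 0 := by
  refine ⟨?_, ?_, by simp [psi], fun x => ?_, (hasDerivAt_psi_zero α).deriv, ?_, ?_, ?_⟩
  · rw [psi_eqOn_Iic α (by simp : (-1 : ℝ) ∈ Iic 0), cubic]
    ring
  · rw [psi_eqOn_Ici α (by simp : (1 : ℝ) ∈ Ici 0), cubic]
    ring
  · rcases lt_trichotomy x 0 with h | rfl | h
    · exact (psi_eventuallyEq_of_neg α h).differentiableAt_iff.2
        (hasDerivAt_cubic _ _ _ _ x).differentiableAt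
    · exact (hasDerivAt_psi_zero α).differentiableAt
    · exact (psi_eventuallyEq_of_pos α h).differentiableAt_iff.2
        (hasDerivAt_cubic _ _ _ _ x).differentiableAt
  · rw [((psi_eventuallyEq_of_neg α neg_one_lt_zero).iterate_deriv 2).eq_of_nhds,
      iterate_deriv_two_cubic]
    ring
  · rw [((psi_eventuallyEq_of_pos α one_pos).iterate_deriv 2).eq_of_nhds,
      iterate_deriv_two_cubic]
    ring
  · rintro x (hx | hx)
    · rw [((psi_eventuallyEq_of_neg α hx.2).iterate_deriv 4).eq_of_nhds,
        iterate_deriv_four_cubic]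
    · rw [((psi_eventuallyEq_of_pos α hx.1).iterate_deriv 4).eq_of_nhds,
        iterate_deriv_four_cubic]
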